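/- Let b, c, ν, s ∈ ℂ with Re(c) > 0, Re(ν) > -1, Re(s) > 0, Re(c+ν+s) > 0, and such that ν+m is not a nonpositive integer for any integer m ≥ 0; let z > 0 be real. Then the Mellin transform in the parameter ρ satisfies ∫_0^∞ ρ^{s-1} G_ν^{(b,c)}(z;ρ) dρ (integral over real ρ ∈ (0,∞)) = (Γ(s)Γ(c+ν+s)/(Γ(ν+1)² Γ(c))) · ₂F₃((c+ν+s)/2, (c+ν+s+1)/2; ν+1, (ν+1)/2, (ν+2)/2; -b z²/4) · Σ_{m=0}^∞ ((ν+2m) Γ(ν+m)/m!) · J_{ν+2m}(z). -/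

import Mathlib

open Complex MeasureTheory Real Set

/-- Extended Gamma function `Γ_ρ(x) = ∫_0^∞ t^(x-1) e^(-t-ρ/t) dt`. -/
noncomputable def extGamma (ρ x : ℂ) : ℂ :=
  ∫ t in Ioi (0:ℝ), (t:ℂ) ^ (x - 1) * Complex.exp (-(t:ℂ) - ρ / (t:ℂ))

/-- Generalized Pochhammer symbol `(c;ρ)_μ = Γ_ρ(c+μ)/Γ(c)`. -/
noncomputable def genPoch (c ρ μ : ℂ) : ℂ := extGamma ρ (c + μ) / Complex.Gamma c

/-- Unified four parameter Bessel function `G_ν^{(b,c)}(z;ρ)` with complex order,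
powers being principal complex powers. -/
noncomputable def unifiedG (b c ν ρ z : ℂ) : ℂ :=
  ∑' k : ℕ, (-b) ^ k * genPoch c ρ (2 * (k:ℂ) + ν) * (z / 2) ^ (2 * (k:ℂ) + ν) /
    ((k.factorial : ℂ) * Complex.Gamma (ν + (k:ℂ) + 1) * Complex.Gamma (ν + 2 * (k:ℂ) + 1))

/-- Unified four parameter Bessel function with integer order, powers being integer powers. -/
noncomputable def unifiedGInt (b c ρ : ℂ) (ν : ℤ) (z : ℂ) : ℂ :=
  ∑' k : ℕ, (-b) ^ k * genPoch c ρ (2 * (k:ℂ) + (ν:ℂ)) * (z / 2) ^ (2 * (k:ℤ) + ν) /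
    ((k.factorial : ℂ) * Complex.Gamma ((ν:ℂ) + (k:ℂ) + 1) * Complex.Gamma ((ν:ℂ) + 2 * (k:ℂ) + 1))

/-- Pochhammer symbol `(a)_k = Γ(a+k)/Γ(a)`. -/
noncomputable def poch (a : ℂ) (k : ℕ) : ℂ := Complex.Gamma (a + (k:ℂ)) / Complex.Gamma a

/-- Generalized hypergeometric function `₀F₃`. -/
noncomputable def hyp0F3 (a₁ a₂ a₃ w : ℂ) : ℂ :=
  ∑' k : ℕ, w ^ k / (poch a₁ k * poch a₂ k * poch a₃ k * (k.factorial : ℂ))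

/-- Generalized hypergeometric function `₂F₃`. -/
noncomputable def hyp2F3 (a₁ a₂ b₁ b₂ b₃ w : ℂ) : ℂ :=
  ∑' k : ℕ, poch a₁ k * poch a₂ k * w ^ k /
    (poch b₁ k * poch b₂ k * poch b₃ k * (k.factorial : ℂ))

/-- Bessel function of the first kind `J_μ(z)` for real `z > 0`. -/
noncomputable def besselJ (μ : ℂ) (z : ℝ) : ℂ :=
  ∑' k : ℕ, (-1) ^ k * ((z:ℂ) / 2) ^ (2 * (k:ℂ) + μ) /
    ((k.factorial : ℂ) * Complex.Gamma (μ + (k:ℂ) + 1))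

/-- Generalized four parameter spherical Bessel function
`g_ν^{(b,c)}(z;ρ) = √(π/(2z)) · G_{ν+1/2}^{(b,c-1/2)}(z;ρ)`. -/
noncomputable def sphG (b c ν ρ : ℂ) (z : ℝ) : ℂ :=
  (Real.sqrt (π / (2 * z)) : ℂ) * unifiedG b (c - 1/2) (ν + 1/2) ρ (z:ℂ)

/-- Generalized four parameter Bessel-Clifford function
`C_ν^{(b,λ)}(z;ρ) = z^{-ν/2} · G_ν^{(b,λ)}(2√z;ρ)` for real `z > 0`. -/
noncomputable def cliffC (b lam ν ρ : ℂ) (z : ℝ) : ℂ :=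
  (z:ℂ) ^ (-ν / 2) * unifiedG b lam ν ρ ((2 * Real.sqrt z : ℝ) : ℂ)

/-- The integrand of the iterated integral obtained by expanding `∫ ρ^(s-1) Γ_ρ(x) dρ`. -/
noncomputable def mellinKernel (s x : ℂ) (ρ t : ℝ) : ℂ :=
  (ρ:ℂ) ^ (s - 1) * ((t:ℂ) ^ (x - 1) * Complex.exp (-(t:ℂ) - (ρ:ℂ) / (t:ℂ)))

lemma integral_mellinKernel_left {s : ℂ} (hs : 0 < s.re) (x : ℂ) {t : ℝ} (ht : 0 < t) :
    ∫ ρ in Ioi (0:ℝ), mellinKernel s x ρ t =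
      Complex.Gamma s * ((Real.exp (-t) : ℂ) * (t:ℂ) ^ (s + x - 1)) := by
  have htc : (t:ℂ) ≠ 0 := by exact_mod_cast ht.ne'
  have h := Complex.integral_cpow_mul_exp_neg_mul_Ioi hs (inv_pos.mpr ht)
  have h2 : ∀ ρ : ℝ, mellinKernel s x ρ t = ((t:ℂ) ^ (x - 1) * Complex.exp (-(t:ℂ))) *
      ((ρ:ℂ) ^ (s - 1) * Complex.exp (-(((t⁻¹ : ℝ) : ℂ) * ρ))) := by
    intro ρ
    have : -(t:ℂ) - (ρ:ℂ) / (t:ℂ) = -(t:ℂ) + -(((t⁻¹ : ℝ) : ℂ) * ρ) := by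
      push_cast; ring
    rw [mellinKernel, this, Complex.exp_add]; ring
  simp_rw [h2]
  rw [integral_const_mul, h]
  have : s + x - 1 = s + (x - 1) := by ring
  rw [this, Complex.cpow_add _ _ htc]
  push_cast
  rw [one_div, inv_inv]
  ring

lemma norm_mellinKernel (s x : ℂ) {ρ t : ℝ} (hρ : 0 < ρ) (ht : 0 < t) :
    ‖mellinKernel s x ρ t‖ =
      (t ^ (x.re - 1) * Real.exp (-t)) * (ρ ^ (s.re - 1) * Real.exp (-(t⁻¹ * ρ))) := by
  have : -(t:ℂ) - (ρ:ℂ) / (t:ℂ) = ((-t + -(t⁻¹ * ρ) : ℝ) : ℂ) := by push_cast; ring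
  rw [mellinKernel, norm_mul, norm_mul, Complex.norm_cpow_eq_rpow_re_of_pos hρ,
    Complex.norm_cpow_eq_rpow_re_of_pos ht, this, ← Complex.ofReal_exp, Complex.norm_real,
    Real.norm_of_nonneg (Real.exp_pos _).le, Real.exp_add]
  simp only [Complex.sub_re, Complex.one_re]
  ring

lemma integral_norm_mellinKernel_left {s : ℂ} (hs : 0 < s.re) (x : ℂ) {t : ℝ} (ht : 0 < t) :
    ∫ ρ in Ioi (0:ℝ), ‖mellinKernel s x ρ t‖ =
      Real.Gamma s.re * (Real.exp (-t) * t ^ ((s + x).re - 1)) := by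
  rw [setIntegral_congr_fun measurableSet_Ioi (fun ρ hρ => norm_mellinKernel s x hρ ht),
    integral_const_mul, Real.integral_rpow_mul_exp_neg_mul_Ioi hs (inv_pos.mpr ht)]
  have : (s + x).re - 1 = s.re + (x.re - 1) := by simp; ring
  rw [this, Real.rpow_add ht, one_div, inv_inv]
  ring

lemma measurable_mellinKernel (s x : ℂ) : Measurable (Function.uncurry (mellinKernel s x)) := by
  have : Function.uncurry (mellinKernel s x) = fun p : ℝ × ℝ => (p.1:ℂ) ^ (s - 1) *
      ((p.2:ℂ) ^ (x - 1) * Complex.exp (-(p.2:ℂ) - (p.1:ℂ) / (p.2:ℂ))) := rfl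
  rw [this]
  fun_prop

lemma integrable_mellinKernel_left {s : ℂ} (hs : 0 < s.re) (x : ℂ) {t : ℝ} (ht : 0 < t) :
    IntegrableOn (fun ρ => mellinKernel s x ρ t) (Ioi 0) := by
  have hm : Measurable (fun ρ => mellinKernel s x ρ t) :=
    (measurable_mellinKernel s x).comp (measurable_id.prodMk measurable_const)
  refine (integrable_norm_iff hm.aestronglyMeasurable).mp ?_
  refine not_imp_comm.1 integral_undef ?_
  rw [integral_norm_mellinKernel_left hs x ht]
  have := Real.Gamma_pos_of_pos hs
  positivity

lemma integrable_mellinKernel {s x : ℂ} (hs : 0 < s.re) (hsx : 0 < (s + x).re) :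
    Integrable (Function.uncurry (mellinKernel s x))
      ((volume.restrict (Ioi (0:ℝ))).prod (volume.restrict (Ioi (0:ℝ)))) := by
  rw [integrable_prod_iff' (measurable_mellinKernel s x).aestronglyMeasurable]
  constructor
  · filter_upwards [ae_restrict_mem measurableSet_Ioi] with t ht
    exact integrable_mellinKernel_left hs x ht
  · have h := (Real.GammaIntegral_convergent hsx).const_mul (Real.Gamma s.re)
    refine IntegrableOn.congr_fun h (fun t ht => ?_) measurableSet_Ioi
    exact (integral_norm_mellinKernel_left hs x ht).symm

lemma cpow_mul_extGamma (s x : ℂ) (ρ : ℝ) :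
    (ρ:ℂ) ^ (s - 1) * extGamma ρ x = ∫ t in Ioi (0:ℝ), mellinKernel s x ρ t := by
  simp only [mellinKernel, extGamma, integral_const_mul]

lemma integrable_cpow_mul_extGamma {s x : ℂ} (hs : 0 < s.re) (hsx : 0 < (s + x).re) :
    IntegrableOn (fun ρ : ℝ => (ρ:ℂ) ^ (s - 1) * extGamma ρ x) (Ioi 0) := by
  simp_rw [cpow_mul_extGamma]
  exact (integrable_mellinKernel hs hsx).integral_prod_left

/-- The Mellin transform of the extended Gamma function in its parameter. -/
lemma integral_cpow_mul_extGamma {s x : ℂ} (hs : 0 < s.re) (hsx : 0 < (s + x).re) :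
    ∫ ρ in Ioi (0:ℝ), (ρ:ℂ) ^ (s - 1) * extGamma ρ x =
      Complex.Gamma s * Complex.Gamma (s + x) := by
  simp_rw [cpow_mul_extGamma]
  rw [integral_integral_swap (integrable_mellinKernel hs hsx),
    setIntegral_congr_fun measurableSet_Ioi (fun t ht => integral_mellinKernel_left hs x ht),
    integral_const_mul, Complex.Gamma_eq_integral hsx, Complex.GammaIntegral]

lemma integral_norm_cpow_mul_extGamma_le {s x : ℂ} (hs : 0 < s.re) (hsx : 0 < (s + x).re) :
    ∫ ρ in Ioi (0:ℝ), ‖(ρ:ℂ) ^ (s - 1) * extGamma ρ x‖ ≤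
      Real.Gamma s.re * Real.Gamma (s + x).re := by
  have hint := (integrable_mellinKernel hs hsx).norm
  calc ∫ ρ in Ioi (0:ℝ), ‖(ρ:ℂ) ^ (s - 1) * extGamma ρ x‖
      ≤ ∫ ρ in Ioi (0:ℝ), ∫ t in Ioi (0:ℝ), ‖mellinKernel s x ρ t‖ := by
        refine integral_mono (integrable_cpow_mul_extGamma hs hsx).norm
          hint.integral_prod_left (fun ρ => ?_)
        simp only [cpow_mul_extGamma]
        exact norm_integral_le_integral_norm _
    _ = _ := by
        rw [integral_integral_swap hint,
          setIntegral_congr_fun measurableSet_Ioi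
            (fun t ht => integral_norm_mellinKernel_left hs x ht),
          integral_const_mul, Real.Gamma_eq_integral hsx]

lemma poch_succ {a : ℂ} (ha : 0 < a.re) (k : ℕ) : poch a (k + 1) = (a + k) * poch a k := by
  have h : a + (k:ℂ) ≠ 0 := fun h => by
    have := congrArg Complex.re h
    simp at this
    have hk : (0:ℝ) ≤ k := k.cast_nonneg
    linarith
  unfold poch
  push_cast
  rw [← add_assoc, Complex.Gamma_add_one _ h]
  ring

lemma Gamma_add_two_mul {a : ℂ} (ha : 0 < a.re) (k : ℕ) :
    Complex.Gamma (a + 2 * (k:ℂ)) =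
      Complex.Gamma a * 4 ^ k * (poch (a / 2) k * poch ((a + 1) / 2) k) := by
  induction k with
  | zero =>
    have h1 : Complex.Gamma (a / 2) ≠ 0 := Complex.Gamma_ne_zero_of_re_pos (by simpa using ha)
    have h2 : Complex.Gamma ((a + 1) / 2) ≠ 0 :=
      Complex.Gamma_ne_zero_of_re_pos (by simp; linarith)
    simp [poch, h1, h2]
  | succ k ih =>
    have hk : (0:ℝ) ≤ k := k.cast_nonneg
    have h0 : a + 2 * (k:ℂ) ≠ 0 := fun h => by
      have := congrArg Complex.re h
      simp at this
      linarith
    have h1 : a + 2 * (k:ℂ) + 1 ≠ 0 := fun h => by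
      have := congrArg Complex.re h
      simp at this
      linarith
    have e : a + 2 * ((k + 1 : ℕ) : ℂ) = a + 2 * (k:ℂ) + 1 + 1 := by push_cast; ring
    rw [e, Complex.Gamma_add_one _ h1, Complex.Gamma_add_one _ h0, ih,
      poch_succ (by simpa using ha), poch_succ (by simp; linarith)]
    ring

lemma cpow_two_mul_add {w : ℂ} (hw : w ≠ 0) (k : ℕ) (ν : ℂ) :
    w ^ (2 * (k:ℂ) + ν) = (w ^ 2) ^ k * w ^ ν := by
  have : 2 * (k:ℂ) = ((2 * k : ℕ) : ℂ) := by push_cast; ring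
  rw [Complex.cpow_add _ _ hw, this, Complex.cpow_natCast, pow_mul]

lemma summable_Gamma_two_mul {ν : ℂ} (hν : -1 < ν.re) {A X : ℝ} (hA : 0 < A) (hX : 0 ≤ X) :
    Summable fun k : ℕ => Real.Gamma (A + 2 * k) * (X ^ k /
      (k.factorial * ‖Complex.Gamma (ν + k + 1)‖ * ‖Complex.Gamma (ν + 2 * k + 1)‖)) := by
  refine summable_of_ratio_norm_eventually_le (r := 1 / 2) (by norm_num) ?_
  filter_upwards [Filter.eventually_ge_atTop (⌈A + 9 * X + 1⌉₊)] with k hk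
  have hk' : A + 9 * X + 1 ≤ k := Nat.ceil_le.mp hk
  have hk1 : (1:ℝ) ≤ k := by linarith
  have n1 : (k:ℝ) ≤ ‖ν + k + 1‖ := by
    refine le_trans ?_ (Complex.re_le_norm _); simp; linarith
  have n2 : (k:ℝ) ≤ ‖ν + 2 * k + 1‖ := by
    refine le_trans ?_ (Complex.re_le_norm _); simp; linarith
  have n3 : (k:ℝ) ≤ ‖ν + 2 * k + 1 + 1‖ := by
    refine le_trans ?_ (Complex.re_le_norm _); simp; linarith
  have z1 : ν + k + 1 ≠ 0 := norm_pos_iff.mp (by linarith)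
  have z2 : ν + 2 * k + 1 ≠ 0 := norm_pos_iff.mp (by linarith)
  have z3 : ν + 2 * k + 1 + 1 ≠ 0 := norm_pos_iff.mp (by linarith)
  have e1 : ν + ((k + 1 : ℕ) : ℂ) + 1 = ν + k + 1 + 1 := by push_cast; ring
  have e2 : ν + 2 * ((k + 1 : ℕ) : ℂ) + 1 = ν + 2 * k + 1 + 1 + 1 := by push_cast; ring
  have e3 : A + 2 * ((k + 1 : ℕ) : ℝ) = A + 2 * k + 1 + 1 := by push_cast; ring
  have g1 : 0 < ‖Complex.Gamma (ν + k + 1)‖ := norm_pos_iff.mpr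
    (Complex.Gamma_ne_zero_of_re_pos (by simp; linarith))
  have g2 : 0 < ‖Complex.Gamma (ν + 2 * k + 1)‖ := norm_pos_iff.mpr
    (Complex.Gamma_ne_zero_of_re_pos (by simp; linarith))
  have g3 : 0 < Real.Gamma (A + 2 * k) := Real.Gamma_pos_of_pos (by linarith)
  have hg : 0 ≤ Real.Gamma (A + 2 * k) * (X ^ k /
      (k.factorial * ‖Complex.Gamma (ν + k + 1)‖ * ‖Complex.Gamma (ν + 2 * k + 1)‖)) := by
    positivity
  have g4 : 0 < Real.Gamma (A + 2 * ((k + 1 : ℕ) : ℝ)) := Real.Gamma_pos_of_pos (by positivity)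
  rw [Real.norm_of_nonneg hg, Real.norm_of_nonneg (by positivity)]
  rw [e1, e2, e3, Complex.Gamma_add_one _ z1, Complex.Gamma_add_one _ z3,
    Complex.Gamma_add_one _ z2, Real.Gamma_add_one (by linarith), Real.Gamma_add_one (by linarith),
    Nat.factorial_succ]
  simp only [norm_mul]
  push_cast
  have key : (A + 2 * k + 1) * (A + 2 * k) * X /
      ((k + 1) * ‖ν + k + 1‖ * (‖ν + 2 * k + 1 + 1‖ * ‖ν + 2 * k + 1‖)) ≤ 1 / 2 := by
    have hk0 : (0:ℝ) < k := by linarith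
    rw [div_le_iff₀ (by positivity)]
    have d : (k:ℝ) * k * (k * k) ≤
        (k + 1) * ‖ν + k + 1‖ * (‖ν + 2 * k + 1 + 1‖ * ‖ν + 2 * k + 1‖) := by
      gcongr
      linarith
    have n : (A + 2 * k + 1) * (A + 2 * k) * X ≤ (3 * k) * (3 * k) * (k / 18) * k := by
      have : (3 * k) * (3 * k) * (k / 18) * (k:ℝ) = (3 * k) * (3 * k) * (k * k / 18) := by ring
      rw [this]
      gcongr
      · linarith
      · linarith
      · nlinarith
    nlinarith
  refine le_trans (le_of_eq ?_) (mul_le_mul_of_nonneg_right key hg)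
  rw [pow_succ]
  have := norm_pos_iff.mpr z1
  have := norm_pos_iff.mpr z2
  have := norm_pos_iff.mpr z3
  field_simp

lemma pow_mul_norm_Gamma_le {a : ℂ} {δ : ℝ} (hδ : 0 < δ) (h : ∀ j : ℕ, δ ≤ ‖a + j‖) (n : ℕ) :
    δ ^ n * ‖Complex.Gamma a‖ ≤ ‖Complex.Gamma (a + n)‖ := by
  induction n with
  | zero => simp
  | succ n ih =>
    have h0 : a + (n:ℂ) ≠ 0 := norm_pos_iff.mp (hδ.trans_le (h n))
    have e : a + ((n + 1 : ℕ) : ℂ) = a + n + 1 := by push_cast; ring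
    rw [e, Complex.Gamma_add_one _ h0, norm_mul, pow_succ', mul_assoc]
    exact mul_le_mul (h n) ih (by positivity) (norm_nonneg _)

/-- Summing a summable double series along antidiagonals. -/
lemma tsum_tsum_eq_tsum_sum_antidiagonal {f : ℕ × ℕ → ℂ} (hf : Summable f) :
    ∑' m, ∑' k, f (m, k) = ∑' n, ∑ p ∈ Finset.HasAntidiagonal.antidiagonal n, f p := by
  rw [← hf.tsum_prod]
  conv_rhs => congr; ext; rw [← Finset.sum_finset_coe, ← tsum_fintype (L := .unconditional _)]
  rw [← Finset.HasAntidiagonal.sigmaAntidiagonalEquivProd.tsum_eq f]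
  exact (Finset.HasAntidiagonal.sigmaAntidiagonalEquivProd.summable_iff.mpr hf).tsum_sigma'
    (fun n ↦ (hasSum_fintype _).summable)

lemma sum_range_neumann_eq_zero {ν : ℂ} (h : ∀ j : ℕ, ν + (j:ℂ) ≠ 0) {n : ℕ} (hn : n ≠ 0) :
    ∑ m ∈ Finset.range (n + 1), (-1) ^ m * (ν + 2 * (m:ℂ)) * Complex.Gamma (ν + m) *
      (n.choose m : ℂ) / Complex.Gamma (ν + n + m + 1) = 0 := by
  have hG : ∀ j : ℕ, Complex.Gamma (ν + n + j) ≠ 0 := fun j => by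
    refine Complex.Gamma_ne_zero fun i hi => h (n + j + i) ?_
    push_cast
    linear_combination hi
  have hn0 : (n:ℂ) ≠ 0 := by exact_mod_cast hn
  have tel := Finset.sum_range_sub (fun m : ℕ => (-1) ^ (m + 1) * (m:ℂ) * Complex.Gamma (ν + m) *
      (n.choose m : ℂ) / Complex.Gamma (ν + n + m)) (n + 1)
  simp only [Nat.choose_succ_self, Nat.cast_zero, mul_zero, zero_mul, zero_div, sub_zero] at tel
  have key : (n:ℂ) * ∑ m ∈ Finset.range (n + 1), (-1) ^ m * (ν + 2 * (m:ℂ)) *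
      Complex.Gamma (ν + m) * (n.choose m : ℂ) / Complex.Gamma (ν + n + m + 1) = 0 := by
    rw [← tel, Finset.mul_sum]
    refine Finset.sum_congr rfl fun m hm => ?_
    have hmn : m ≤ n := Nat.lt_succ_iff.mp (Finset.mem_range.mp hm)
    have hch : (n.choose (m + 1) : ℂ) * (m + 1) = n.choose m * (n - m) := by
      rw [← Nat.cast_sub hmn]
      exact_mod_cast Nat.choose_succ_right_eq n m
    have hnm : ν + n + m ≠ 0 := by simpa [add_assoc] using h (n + m)
    have e1 : ν + ((m + 1 : ℕ) : ℂ) = ν + m + 1 := by push_cast; ring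
    have e2 : ν + n + ((m + 1 : ℕ) : ℂ) = ν + n + m + 1 := by push_cast; ring
    rw [e1, e2, Complex.Gamma_add_one _ (h m), Complex.Gamma_add_one _ hnm]
    have := hG m
    push_cast
    field_simp
    linear_combination (-1) * (-1) ^ m * (ν + m) * Complex.Gamma (ν + m) * hch
  exact (mul_eq_zero.mp key).resolve_left hn0

lemma sum_antidiagonal_neumann {ν : ℂ} (h : ∀ j : ℕ, ν + (j:ℂ) ≠ 0) (w Z : ℂ) (n : ℕ) :
    ∑ p ∈ Finset.HasAntidiagonal.antidiagonal n, (ν + 2 * (p.1:ℂ)) * Complex.Gamma (ν + p.1) / p.1.factorial *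
      ((-1) ^ p.2 * (w ^ (p.2 + p.1) * Z) /
        (p.2.factorial * Complex.Gamma (ν + 2 * p.1 + p.2 + 1))) =
      if n = 0 then Z else 0 := by
  rcases eq_or_ne n 0 with rfl | hn
  · have h0 : ν ≠ 0 := by simpa using h 0
    have hG : Complex.Gamma ν ≠ 0 := Complex.Gamma_ne_zero fun i hi => h i (by rw [hi]; ring)
    simp [Complex.Gamma_add_one _ h0]
    field_simp
  · rw [if_neg hn, Finset.Nat.sum_antidiagonal_eq_sum_range_succ_mk]
    rw [← mul_zero ((-1) ^ n * w ^ n * Z / (n.factorial : ℂ)), ← sum_range_neumann_eq_zero h hn,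
      Finset.mul_sum]
    refine Finset.sum_congr rfl fun m hm => ?_
    have hmn : m ≤ n := Nat.lt_succ_iff.mp (Finset.mem_range.mp hm)
    have hs : ((-1 : ℂ)) ^ (n - m) = (-1) ^ n * (-1) ^ m := by
      obtain ⟨k, rfl⟩ := Nat.exists_eq_add_of_le hmn
      rw [Nat.add_sub_cancel_left, pow_add]
      have : ((-1 : ℂ)) ^ m * (-1) ^ m = 1 := by rw [← mul_pow]; simp
      linear_combination (-(-1) ^ k) * this
    have e : ν + 2 * (m:ℂ) + ((n - m : ℕ) : ℂ) + 1 = ν + n + m + 1 := by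
      rw [Nat.cast_sub hmn]; ring
    have f1 : (m.factorial : ℂ) ≠ 0 := by exact_mod_cast m.factorial_ne_zero
    have f2 : ((n - m).factorial : ℂ) ≠ 0 := by exact_mod_cast (n - m).factorial_ne_zero
    have f3 : (n.factorial : ℂ) ≠ 0 := by exact_mod_cast n.factorial_ne_zero
    have hch : (n.choose m : ℂ) * m.factorial * (n - m).factorial = n.factorial := by
      exact_mod_cast Nat.choose_mul_factorial_mul_factorial hmn
    have hch' : (n.choose m : ℂ) = n.factorial / (m.factorial * (n - m).factorial) := by
      rw [← hch]; field_simp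
    simp only [hs, e, Nat.sub_add_cancel hmn, hch']
    field_simp

lemma summable_neumann {ν : ℂ} (hν : -1 < ν.re) (h0 : ν ≠ 0) (w Z : ℂ) :
    Summable fun p : ℕ × ℕ => (ν + 2 * (p.1:ℂ)) * Complex.Gamma (ν + p.1) / p.1.factorial *
      ((-1) ^ p.2 * (w ^ (p.2 + p.1) * Z) /
        (p.2.factorial * Complex.Gamma (ν + 2 * p.1 + p.2 + 1))) := by
  obtain ⟨δ, hδ, hδν⟩ : ∃ δ : ℝ, 0 < δ ∧ ∀ j : ℕ, δ ≤ ‖ν + j‖ := by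
    refine ⟨min ‖ν‖ (ν.re + 1), lt_min (norm_pos_iff.mpr h0) (by linarith), fun j => ?_⟩
    rcases j with _ | j
    · simp
    · refine (min_le_right _ _).trans (le_trans ?_ (Complex.re_le_norm _))
      have : (0:ℝ) ≤ j := j.cast_nonneg
      simp [this]
  have hs := ((Real.summable_pow_div_factorial (2 * (‖w‖ / δ))).mul_left
    ((‖ν‖ + 2) * ‖Z‖ / δ)).mul_of_nonneg (Real.summable_pow_div_factorial (‖w‖ / δ))
    (fun m => by positivity) (fun k => by positivity)
  refine Summable.of_norm_bounded hs fun ⟨m, k⟩ => ?_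
  have hG := pow_mul_norm_Gamma_le (a := ν + m) hδ
    (fun j => by simpa [add_assoc] using hδν (m + j)) (m + k + 1)
  have e : ν + m + ((m + k + 1 : ℕ) : ℂ) = ν + 2 * m + k + 1 := by push_cast; ring
  rw [e] at hG
  have hGm : 0 < ‖Complex.Gamma (ν + m)‖ := norm_pos_iff.mpr <|
    Complex.Gamma_ne_zero fun i hi => by
      have := hδν (m + i)
      rw [Nat.cast_add, ← add_assoc, hi] at this
      simp at this
      linarith
  have hG0 : 0 < ‖Complex.Gamma (ν + 2 * m + k + 1)‖ := lt_of_lt_of_le (by positivity) hG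
  have hnum : ‖ν + 2 * (m:ℂ)‖ ≤ (‖ν‖ + 2) * 2 ^ m := by
    have h1 : ((m:ℝ) + 1) ≤ 2 ^ m := by exact_mod_cast Nat.lt_two_pow_self
    have h2 : ‖ν + 2 * (m:ℂ)‖ ≤ ‖ν‖ + 2 * m := (norm_add_le _ _).trans (by simp)
    have h3 : (0:ℝ) ≤ m := m.cast_nonneg
    nlinarith [norm_nonneg ν]
  have hq : ‖Complex.Gamma (ν + m)‖ / ‖Complex.Gamma (ν + 2 * m + k + 1)‖ ≤
      1 / δ ^ (m + k + 1) := by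
    rw [div_le_div_iff₀ hG0 (by positivity)]
    linarith
  calc _ = ‖ν + 2 * (m:ℂ)‖ *
        (‖Complex.Gamma (ν + m)‖ / ‖Complex.Gamma (ν + 2 * m + k + 1)‖) *
        (‖w‖ ^ (k + m) * ‖Z‖ / (m.factorial * k.factorial)) := by
        simp only [norm_mul, norm_div, norm_pow, norm_neg, norm_one, one_pow, one_mul,
          Complex.norm_natCast]
        field_simp
    _ ≤ ((‖ν‖ + 2) * 2 ^ m) * (1 / δ ^ (m + k + 1)) *
        (‖w‖ ^ (k + m) * ‖Z‖ / (m.factorial * k.factorial)) := by gcongr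
    _ = _ := by
        simp only [mul_pow, div_pow, pow_add]
        field_simp

/-- Expansion of a power as a Neumann series of Bessel functions. -/
lemma tsum_mul_besselJ {ν : ℂ} (hν : -1 < ν.re) (h : ∀ j : ℕ, ν + (j:ℂ) ≠ 0) {z : ℝ} (hz : 0 < z) :
    ∑' m : ℕ, (ν + 2 * (m:ℂ)) * Complex.Gamma (ν + (m:ℂ)) / (m.factorial : ℂ) *
      besselJ (ν + 2 * (m:ℂ)) z = ((z:ℂ) / 2) ^ ν := by
  have hz2 : (z:ℂ) / 2 ≠ 0 := by simpa using hz.ne'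
  have hp : ∀ m k : ℕ, ((z:ℂ) / 2) ^ (2 * (k:ℂ) + (ν + 2 * (m:ℂ))) =
      (((z:ℂ) / 2) ^ 2) ^ (k + m) * ((z:ℂ) / 2) ^ ν := fun m k => by
    rw [← cpow_two_mul_add hz2]
    push_cast
    ring_nf
  simp only [besselJ, hp, ← tsum_mul_left]
  have hs := summable_neumann hν (by simpa using h 0) (((z:ℂ) / 2) ^ 2) (((z:ℂ) / 2) ^ ν)
  rw [tsum_tsum_eq_tsum_sum_antidiagonal hs]
  simp only [sum_antidiagonal_neumann h]
  exact tsum_ite_eq 0 _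

/-- Termwise Mellin transform of `unifiedG` in its parameter `ρ`. -/
lemma integral_cpow_mul_unifiedG {b c ν s : ℂ} (hν : -1 < ν.re) (hs : 0 < s.re)
    (hcs : 0 < (c + ν + s).re) {z : ℝ} (hz : 0 < z) :
    ∫ ρ in Ioi (0:ℝ), (ρ:ℂ) ^ (s - 1) * unifiedG b c ν (ρ:ℂ) (z:ℂ) =
      ∑' k : ℕ, (-b) ^ k * (((z:ℂ) / 2) ^ 2) ^ k * ((z:ℂ) / 2) ^ ν /
        Complex.Gamma c / ((k.factorial : ℂ) * Complex.Gamma (ν + (k:ℂ) + 1) *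
          Complex.Gamma (ν + 2 * (k:ℂ) + 1)) *
        (Complex.Gamma s * Complex.Gamma (c + ν + s + 2 * k)) := by
  have hz2 : (z:ℂ) / 2 ≠ 0 := by simpa using hz.ne'
  have hre : ∀ k : ℕ, (s + (c + (2 * (k:ℂ) + ν))).re = (c + ν + s).re + 2 * k := fun k => by
    simp; ring
  have hpos : ∀ k : ℕ, 0 < (s + (c + (2 * (k:ℂ) + ν))).re := fun k => by
    rw [hre]; positivity
  let D : ℕ → ℂ := fun k => (-b) ^ k * (((z:ℂ) / 2) ^ 2) ^ k * ((z:ℂ) / 2) ^ ν /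
    Complex.Gamma c / ((k.factorial : ℂ) * Complex.Gamma (ν + (k:ℂ) + 1) *
      Complex.Gamma (ν + 2 * (k:ℂ) + 1))
  let F : ℕ → ℝ → ℂ := fun k ρ =>
    D k * ((ρ:ℂ) ^ (s - 1) * extGamma ρ (c + (2 * (k:ℂ) + ν)))
  have hF : ∀ ρ : ℝ, (ρ:ℂ) ^ (s - 1) * unifiedG b c ν (ρ:ℂ) (z:ℂ) = ∑' k, F k ρ := fun ρ => by
    rw [unifiedG, ← tsum_mul_left]
    refine tsum_congr fun k => ?_
    simp only [F, D, genPoch, cpow_two_mul_add hz2]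
    ring
  have hint : ∀ k, Integrable (F k) (volume.restrict (Ioi 0)) := fun k =>
    (integrable_cpow_mul_extGamma hs (hpos k)).const_mul _
  have hsum : Summable fun k => ∫ ρ in Ioi (0:ℝ), ‖F k ρ‖ := by
    have hX : 0 ≤ ‖b‖ * ‖(z:ℂ) / 2‖ ^ 2 := by positivity
    refine Summable.of_nonneg_of_le (fun k => integral_nonneg fun ρ => norm_nonneg _) (fun k => ?_)
      ((summable_Gamma_two_mul hν hcs hX).mul_left
        (Real.Gamma s.re * ‖((z:ℂ) / 2) ^ ν‖ / ‖Complex.Gamma c‖))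
    simp only [F, norm_mul (D k), integral_const_mul]
    refine (mul_le_mul_of_nonneg_left (integral_norm_cpow_mul_extGamma_le hs (hpos k))
      (norm_nonneg _)).trans (le_of_eq ?_)
    simp only [hre, D, norm_mul, norm_div, norm_pow, norm_neg, Complex.norm_natCast, mul_pow]
    ring
  simp_rw [hF]
  rw [← (hasSum_integral_of_summable_integral_norm hint hsum).tsum_eq]
  refine tsum_congr fun k => ?_
  have e : s + (c + (2 * (k:ℂ) + ν)) = c + ν + s + 2 * k := by ring
  simp only [F, D, integral_const_mul]
  rw [integral_cpow_mul_extGamma hs (hpos k), e]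

theorem stmt6 (b c ν s : ℂ) (hc : 0 < c.re) (hν : -1 < ν.re) (hs : 0 < s.re)
    (hcs : 0 < (c + ν + s).re) (hνm : ∀ m : ℕ, ∀ j : ℕ, ν + (m:ℂ) ≠ -(j:ℂ))
    (z : ℝ) (hz : 0 < z) :
    (∫ ρ in Ioi (0:ℝ), (ρ:ℂ) ^ (s - 1) * unifiedG b c ν (ρ:ℂ) (z:ℂ)) =
      Complex.Gamma s * Complex.Gamma (c + ν + s) /
          (Complex.Gamma (ν + 1) ^ 2 * Complex.Gamma c) *
        hyp2F3 ((c + ν + s) / 2) ((c + ν + s + 1) / 2) (ν + 1) ((ν + 1) / 2) ((ν + 2) / 2)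
          (-b * (z:ℂ) ^ 2 / 4) *
        ∑' m : ℕ, (ν + 2 * (m:ℂ)) * Complex.Gamma (ν + (m:ℂ)) / (m.factorial : ℂ) *
          besselJ (ν + 2 * (m:ℂ)) z := by
  have hν0 : ∀ j : ℕ, ν + (j:ℂ) ≠ 0 := fun j => by simpa using hνm j 0
  rw [tsum_mul_besselJ hν hν0 hz, integral_cpow_mul_unifiedG hν hs hcs hz, hyp2F3,
    ← tsum_mul_left, ← tsum_mul_right]
  refine tsum_congr fun k => ?_
  have hν1 : 0 < (ν + 1).re := by simp; linarith
  have hνG : Complex.Gamma (ν + 1) ≠ 0 := Complex.Gamma_ne_zero_of_re_pos hν1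
  have e2 : ν + 2 * (k:ℂ) + 1 = ν + 1 + 2 * k := by ring
  have e3 : Complex.Gamma (ν + k + 1) = Complex.Gamma (ν + 1) * poch (ν + 1) k := by
    rw [poch, mul_div_cancel₀ _ hνG]
    ring_nf
  have e4 : (ν + 2) / 2 = (ν + 1 + 1) / 2 := by ring
  have e5 : (-b * (z:ℂ) ^ 2 / 4) ^ k = (-b) ^ k * (((z:ℂ) / 2) ^ 2) ^ k := by
    rw [← mul_pow]; congr 1; ring
  rw [e2, e3, e4, e5, Gamma_add_two_mul hcs, Gamma_add_two_mul hν1]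
  have h4 : (4:ℂ) ^ k ≠ 0 := pow_ne_zero _ (by norm_num)
  linear_combination ((-b) ^ k * (((z:ℂ) / 2) ^ 2) ^ k * ((z:ℂ) / 2) ^ ν * Complex.Gamma s *
    Complex.Gamma (c + ν + s) / (Complex.Gamma (ν + 1) ^ 2 * Complex.Gamma c) *
    (poch ((c + ν + s) / 2) k * poch ((c + ν + s + 1) / 2) k) /
    (poch (ν + 1) k * poch ((ν + 1) / 2) k * poch ((ν + 1 + 1) / 2) k * k.factorial)) *
    mul_inv_cancel₀ h4
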